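/- Compactness of the weighted K₁ operator: for every β, γ > 0, the integral operator on L²(0,2π) with kernel a(p)^{−1/2} · K₁(p,q) · a(q)^{−1/2} is a well-defined bounded linear operator which is compact. -/

import Mathlib

open MeasureTheory Real Set

noncomputable section

/-- The dispersion relation `ω(p) = |sin(p/2)|`. -/
def ω (p : ℝ) : ℝ := |Real.sin (p / 2)|

/-- Parameterization `h(x,z)` of the resonant manifold. -/
def resH (x z : ℝ) : ℝ :=
  (z - x) / 2 + 2 * Real.arcsin (Real.tan (|z - x| / 4) * Real.cos ((x + z) / 4))

/-- `F₊(x,z) = (cos(x/2)+cos(z/2))² + 4 sin(x/2) sin(z/2)`. -/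
def Fplus (x z : ℝ) : ℝ :=
  (Real.cos (x / 2) + Real.cos (z / 2)) ^ 2 + 4 * Real.sin (x / 2) * Real.sin (z / 2)

/-- `F₋(x,z) = (cos(x/2)+cos(z/2))² − 4 sin(x/2) sin(z/2)`. -/
def Fminus (x z : ℝ) : ℝ :=
  (Real.cos (x / 2) + Real.cos (z / 2)) ^ 2 - 4 * Real.sin (x / 2) * Real.sin (z / 2)

/-- The Rayleigh–Jeans equilibrium `𝔣(p) = 1/(βω(p)+γ)`. -/
def fRJ (β γ p : ℝ) : ℝ := 1 / (β * ω p + γ)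

/-- The collision frequency `a(p)`, with `p₁ = h(p,p₂)` and `p₃ = p + p₁ − p₂`. -/
def afreq (β γ p : ℝ) : ℝ :=
  ω p / fRJ β γ p *
    ∫ q in (0:ℝ)..(2 * π),
      ω (resH p q) * ω q * ω (p + resH p q - q) *
        (fRJ β γ (resH p q) * fRJ β γ q * fRJ β γ (p + resH p q - q)) / Real.sqrt (Fplus p q)

/-- The kernel `K₂(p,q)`, with `p₁ = h(p,q)` and `p₃ = p + p₁ − q`. -/
def K2 (β γ p q : ℝ) : ℝ :=
  ω p * ω (resH p q) * ω q * ω (p + resH p q - q) *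
    (fRJ β γ (resH p q) * fRJ β γ (p + resH p q - q)) / Real.sqrt (Fplus p q)

/-- `p₂ = (p+q)/2 + 2 arcsin(tan((p+q)/4) cos((p−q)/4))`, as used in the kernel `K₁`. -/
def p2aux (p q : ℝ) : ℝ :=
  (p + q) / 2 + 2 * Real.arcsin (Real.tan ((p + q) / 4) * Real.cos ((p - q) / 4))

/-- The kernel `K₁(p,q)`, with `p₂ = p2aux p q` and `p₃ = p + q − p₂`. -/
def K1 (β γ p q : ℝ) : ℝ :=
  if 0 < Fminus p q then
    ω p * ω q * ω (p2aux p q) * ω (p + q - p2aux p q) *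
      (fRJ β γ (p2aux p q) * fRJ β γ (p + q - p2aux p q)) / Real.sqrt (Fminus p q)
  else 0

/-- The linearized operator `L`, acting pointwise on functions. -/
def Lfun (β γ : ℝ) (g : ℝ → ℝ) (p : ℝ) : ℝ :=
  -(afreq β γ p * g p) - (∫ q in (0:ℝ)..(2 * π), K1 β γ p q * g q)
    + 2 * ∫ q in (0:ℝ)..(2 * π), K2 β γ p q * g q

/-- The measure on the fundamental domain `(0,2π)`. -/
def μ2π : Measure ℝ := volume.restrict (Set.Ioo 0 (2 * π))

/-!
Since `a(p) ≥ c ω(p)²`, the weights `a^{-1/2}` absorb the factors `ω(p) ω(q)` of `K₁`. Writing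
`p₂, p₃ = (p + q)/2 ± 2θ(p, q)`, what remains is at most a constant times
`cos ((p - q)/4) / cos θ`, which is singular only where `|θ|` reaches `π/2`. This quotient is at
most `4 ∂θ/∂q`, so the change of variables `q ↦ θ` shows that its integral over
`{q : |θ| > π/2 - δ}` is at most `16 δ`. By the Schur test the part of the kernel near the
singularity is therefore small in operator norm, while the other part is bounded and hence
Hilbert–Schmidt, so the operator is a norm limit of compact ones.
-/

section Compactness

variable {𝕜 E F ι : Type*} [RCLike 𝕜] [NormedAddCommGroup E] [InnerProductSpace 𝕜 E]
  [NormedAddCommGroup F] [NormedSpace 𝕜 F]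

lemma isCompactOperator_rankOne (x : F) (y : E) :
    IsCompactOperator (InnerProductSpace.rankOne 𝕜 x y) :=
  (isCompactOperator_of_locallyCompactSpace_rng
    (ContinuousLinearMap.toSpanSingleton 𝕜 x)).comp_clm (innerSL 𝕜 y)

lemma sum_enorm_inner_sq_le {e : ι → E} (he : Orthonormal 𝕜 e) (z : E) (s : Finset ι) :
    ∑ i ∈ s, ‖inner 𝕜 (e i) z‖ₑ ^ 2 ≤ ‖z‖ₑ ^ 2 := by
  simp only [← ofReal_norm, ← ENNReal.ofReal_pow (norm_nonneg _)]
  rw [← ENNReal.ofReal_sum_of_nonneg fun _ _ => sq_nonneg _]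
  exact ENNReal.ofReal_le_ofReal (he.sum_inner_products_le z)

lemma norm_sum_rankOne_le_sqrt {e : ι → E} (he : Orthonormal 𝕜 e) (v : ι → F) (s : Finset ι) :
    ‖∑ i ∈ s, InnerProductSpace.rankOne 𝕜 (v i) (e i)‖ ≤ √(∑ i ∈ s, ‖v i‖ ^ 2) := by
  refine ContinuousLinearMap.opNorm_le_bound _ (Real.sqrt_nonneg _) fun z => ?_
  have bessel : ∑ i ∈ s, ‖inner 𝕜 (e i) z‖ ^ 2 ≤ ‖z‖ ^ 2 := he.sum_inner_products_le z
  calc ‖(∑ i ∈ s, InnerProductSpace.rankOne 𝕜 (v i) (e i)) z‖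
      ≤ ∑ i ∈ s, ‖v i‖ * ‖inner 𝕜 (e i) z‖ := by
        simp only [sum_apply, InnerProductSpace.rankOne_apply]
        refine (norm_sum_le _ _).trans_eq (Finset.sum_congr rfl fun i _ => ?_)
        rw [norm_smul, mul_comm]
    _ ≤ √(∑ i ∈ s, ‖v i‖ ^ 2) * √(∑ i ∈ s, ‖inner 𝕜 (e i) z‖ ^ 2) :=
        Real.sum_mul_le_sqrt_mul_sqrt _ _ _
    _ ≤ √(∑ i ∈ s, ‖v i‖ ^ 2) * ‖z‖ := by
        gcongr
        exact Real.sqrt_le_iff.2 ⟨norm_nonneg z, bessel⟩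

lemma summable_rankOne_of_summable_norm_sq [CompleteSpace F] {e : ι → E}
    (he : Orthonormal 𝕜 e) {v : ι → F} (hv : Summable fun i => ‖v i‖ ^ 2) :
    Summable fun i => InnerProductSpace.rankOne 𝕜 (v i) (e i) := by
  rw [summable_iff_vanishing_norm] at hv ⊢
  intro ε hε
  obtain ⟨s, hs⟩ := hv (ε ^ 2) (by positivity)
  refine ⟨s, fun t hts => (norm_sum_rankOne_le_sqrt he v t).trans_lt ?_⟩
  exact (Real.sqrt_lt' hε).2 ((le_abs_self _).trans_lt (hs t hts))

theorem isCompactOperator_of_summable_norm_sq [CompleteSpace F] (b : HilbertBasis ι 𝕜 E)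
    {T : E →L[𝕜] F} (hT : Summable fun i => ‖T (b i)‖ ^ 2) : IsCompactOperator T := by
  obtain ⟨S, hS⟩ := summable_rankOne_of_summable_norm_sq b.orthonormal hT
  have hTS : T = S := by
    ext z
    have hTz : HasSum (fun i => inner 𝕜 (b i) z • T (b i)) (T z) := by
      simpa [b.repr_apply_apply] using (b.hasSum_repr z).mapL T
    exact hTz.unique (by simpa using hS.mapL (ContinuousLinearMap.apply 𝕜 F z))
  rw [hTS]
  refine isCompactOperator_of_tendsto hS (.of_forall fun s => ?_)
  exact Submodule.sum_mem (compactOperator (RingHom.id 𝕜) E F)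
    fun i _ => isCompactOperator_rankOne (T (b i)) (b i)

end Compactness

section IntegralOperators

open scoped ENNReal NNReal

variable {𝕜 X Y ι : Type*} [RCLike 𝕜] [MeasurableSpace X] [MeasurableSpace Y]
  {μ : Measure X} {ν : Measure Y} {k l : X × Y → 𝕜} {A B : ℝ≥0}

/-- `T` is the integral operator `L²(ν) → L²(μ)` with kernel `k`. -/
def HasIntegralKernel (T : Lp 𝕜 2 ν →L[𝕜] Lp 𝕜 2 μ) (k : X × Y → 𝕜) : Prop :=
  ∀ g : Lp 𝕜 2 ν, T g =ᵐ[μ] fun x => ∫ y, k (x, y) * g y ∂ν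

/-- The integral operator with the nonnegative kernel `|k|` is bounded by `A` from `L²(ν)` to
`L²(μ)`. Testing on `ℝ≥0∞`-valued functions makes the bound carry the a.e. absolute convergence
of the integrals `∫ y, k (x, y) * g y ∂ν`. -/
def KernelBound (k : X × Y → 𝕜) (μ : Measure X) (ν : Measure Y) (A : ℝ≥0) : Prop :=
  ∀ ⦃g : Y → ℝ≥0∞⦄, Measurable g →
    eLpNorm (fun x => ∫⁻ y, ‖k (x, y)‖ₑ * g y ∂ν) 2 μ ≤ A * eLpNorm g 2 ν

lemma eLpNorm_two_sq {ε : Type*} [TopologicalSpace ε] [ContinuousENorm ε] (f : X → ε) :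
    eLpNorm f 2 μ ^ 2 = ∫⁻ x, ‖f x‖ₑ ^ 2 ∂μ := by
  simpa using eLpNorm_nnreal_pow_eq_lintegral (μ := μ) (f := f) (p := 2) two_ne_zero

lemma lintegral_mul_sq_le {f g : X → ℝ≥0∞} (hf : AEMeasurable f μ) (hg : AEMeasurable g μ) :
    (∫⁻ x, f x * g x ∂μ) ^ 2 ≤ (∫⁻ x, f x ^ 2 ∂μ) * ∫⁻ x, g x ^ 2 ∂μ := by
  have holder := ENNReal.lintegral_mul_le_Lp_mul_Lq μ Real.HolderConjugate.two_two hf hg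
  simp only [Pi.mul_apply, ENNReal.rpow_two] at holder
  calc (∫⁻ x, f x * g x ∂μ) ^ 2
      ≤ ((∫⁻ x, f x ^ 2 ∂μ) ^ (1 / 2 : ℝ) * (∫⁻ x, g x ^ 2 ∂μ) ^ (1 / 2 : ℝ)) ^ 2 := by gcongr
    _ = (∫⁻ x, f x ^ 2 ∂μ) * ∫⁻ x, g x ^ 2 ∂μ := by
      rw [mul_pow, ← ENNReal.rpow_two, ← ENNReal.rpow_two, ← ENNReal.rpow_mul, ← ENNReal.rpow_mul]
      norm_num

lemma kernelBound_of_lintegral_sq_le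
    (h : ∀ ⦃g : Y → ℝ≥0∞⦄, Measurable g →
      ∫⁻ x, (∫⁻ y, ‖k (x, y)‖ₑ * g y ∂ν) ^ 2 ∂μ ≤ A ^ 2 * ∫⁻ y, g y ^ 2 ∂ν) :
    KernelBound k μ ν A := by
  intro g hg
  refine (ENNReal.pow_le_pow_left_iff two_ne_zero).1 ?_
  simpa only [mul_pow, eLpNorm_two_sq, enorm_eq_self] using h hg

lemma KernelBound.eLpNorm_lintegral_enorm_le (hA : KernelBound k μ ν A) (g : Lp 𝕜 2 ν) :
    eLpNorm (fun x => ∫⁻ y, ‖k (x, y) * g y‖ₑ ∂ν) 2 μ ≤ A * eLpNorm g 2 ν := by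
  simpa only [enorm_mul, eLpNorm_enorm] using hA (Lp.stronglyMeasurable g).enorm

lemma stronglyMeasurable_kernel_mul (hk : StronglyMeasurable k) (g : Lp 𝕜 2 ν) :
    StronglyMeasurable fun z : X × Y => k z * g z.2 :=
  hk.mul ((Lp.stronglyMeasurable g).comp_measurable measurable_snd)

lemma KernelBound.eLpNorm_integral_le (hA : KernelBound k μ ν A) (g : Lp 𝕜 2 ν) :
    eLpNorm (fun x => ∫ y, k (x, y) * g y ∂ν) 2 μ ≤ A * eLpNorm g 2 ν :=
  (eLpNorm_mono_enorm fun _ => enorm_integral_le_lintegral_enorm _).trans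
    (hA.eLpNorm_lintegral_enorm_le g)

lemma HasIntegralKernel.unique {S T : Lp 𝕜 2 ν →L[𝕜] Lp 𝕜 2 μ} (hT : HasIntegralKernel T k)
    (hS : HasIntegralKernel S k) : T = S :=
  ContinuousLinearMap.ext fun g => Lp.ext ((hT g).trans (hS g).symm)

lemma sum_enorm_integral_mul_sq_le {e : ι → Lp 𝕜 2 ν} (he : Orthonormal 𝕜 e) {f : Y → 𝕜}
    (hf : AEStronglyMeasurable f ν) (s : Finset ι) :
    ∑ i ∈ s, ‖∫ y, f y * e i y ∂ν‖ₑ ^ 2 ≤ eLpNorm f 2 ν ^ 2 := by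
  by_cases htop : eLpNorm f 2 ν = ∞
  · simp [htop]
  have hfstar : MemLp (star f) 2 ν := MemLp.star ⟨hf, lt_top_iff_ne_top.2 htop⟩
  have integral_eq_inner (i : ι) : ∫ y, f y * e i y ∂ν = inner 𝕜 hfstar.toLp (e i) := by
    rw [L2.inner_def]
    refine integral_congr_ae ?_
    filter_upwards [hfstar.coeFn_toLp] with y hy
    simp [hy, mul_comm]
  calc ∑ i ∈ s, ‖∫ y, f y * e i y ∂ν‖ₑ ^ 2
      = ∑ i ∈ s, ‖inner 𝕜 (e i) hfstar.toLp‖ₑ ^ 2 := by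
        simp only [integral_eq_inner, ← ofReal_norm, norm_inner_symm (e _)]
    _ ≤ ‖hfstar.toLp‖ₑ ^ 2 := sum_enorm_inner_sq_le he _ s
    _ = eLpNorm f 2 ν ^ 2 := by
        rw [Lp.enorm_toLp, ← eLpNorm_norm, ← eLpNorm_norm f]
        simp only [Pi.star_apply, norm_star]

variable [SFinite ν]

lemma KernelBound.ae_integrable (hk : StronglyMeasurable k) (hA : KernelBound k μ ν A)
    (g : Lp 𝕜 2 ν) : ∀ᵐ x ∂μ, Integrable (fun y => k (x, y) * g y) ν := by
  have hkg := stronglyMeasurable_kernel_mul hk g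
  have hfinite : ∫⁻ x, (∫⁻ y, ‖k (x, y) * g y‖ₑ ∂ν) ^ 2 ∂μ ≠ ∞ := by
    have := (hA.eLpNorm_lintegral_enorm_le g).trans_lt
      (ENNReal.mul_lt_top ENNReal.coe_lt_top (Lp.eLpNorm_lt_top g))
    simpa only [eLpNorm_two_sq, enorm_eq_self] using ENNReal.pow_ne_top (n := 2) this.ne
  filter_upwards [ae_lt_top (hkg.enorm.lintegral_prod_right'.pow_const 2) hfinite] with x hx
  exact ⟨(hkg.comp_measurable measurable_prodMk_left).aestronglyMeasurable,
    (ENNReal.pow_lt_top_iff.1 hx).resolve_right two_ne_zero⟩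

lemma KernelBound.memLp_integral (hk : StronglyMeasurable k) (hA : KernelBound k μ ν A)
    (g : Lp 𝕜 2 ν) : MemLp (fun x => ∫ y, k (x, y) * g y ∂ν) 2 μ :=
  ⟨(stronglyMeasurable_kernel_mul hk g).integral_prod_right'.aestronglyMeasurable,
    (hA.eLpNorm_integral_le g).trans_lt
      (ENNReal.mul_lt_top ENNReal.coe_lt_top (Lp.eLpNorm_lt_top g))⟩

theorem KernelBound.exists_hasIntegralKernel (hk : StronglyMeasurable k)
    (hA : KernelBound k μ ν A) :
    ∃ T : Lp 𝕜 2 ν →L[𝕜] Lp 𝕜 2 μ, HasIntegralKernel T k ∧ ‖T‖ ≤ A := by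
  have hL := hA.memLp_integral hk
  let T₀ : Lp 𝕜 2 ν →ₗ[𝕜] Lp 𝕜 2 μ :=
    { toFun g := (hL g).toLp
      map_add' g h := by
        rw [← MemLp.toLp_add]
        refine MemLp.toLp_congr _ _ ?_
        filter_upwards [hA.ae_integrable hk g, hA.ae_integrable hk h] with x hg hh
        rw [Pi.add_apply, ← integral_add hg hh]
        refine integral_congr_ae ?_
        filter_upwards [Lp.coeFn_add g h] with y hy
        rw [hy, Pi.add_apply, mul_add]
      map_smul' c g := by
        rw [RingHom.id_apply, ← MemLp.toLp_const_smul]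
        refine MemLp.toLp_congr _ _ (.of_forall fun x => ?_)
        rw [Pi.smul_apply, ← integral_smul]
        refine integral_congr_ae ?_
        filter_upwards [Lp.coeFn_smul c g] with y hy
        rw [hy, Pi.smul_apply, mul_smul_comm] }
  have hbound (g : Lp 𝕜 2 ν) : ‖T₀ g‖ ≤ A * ‖g‖ := by
    rw [show T₀ g = (hL g).toLp from rfl, Lp.norm_toLp, Lp.norm_def]
    simpa using ENNReal.toReal_mono
      (ENNReal.mul_ne_top ENNReal.coe_ne_top (Lp.eLpNorm_ne_top g)) (hA.eLpNorm_integral_le g)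
  exact ⟨T₀.mkContinuous A hbound, fun g => (hL g).coeFn_toLp,
    LinearMap.mkContinuous_norm_le _ A.2 _⟩

lemma HasIntegralKernel.add {S T : Lp 𝕜 2 ν →L[𝕜] Lp 𝕜 2 μ}
    (hk : StronglyMeasurable k) (hl : StronglyMeasurable l)
    (hA : KernelBound k μ ν A) (hB : KernelBound l μ ν B)
    (hT : HasIntegralKernel T k) (hS : HasIntegralKernel S l) :
    HasIntegralKernel (T + S) (k + l) := by
  intro g
  filter_upwards [hT g, hS g, Lp.coeFn_add (T g) (S g), hA.ae_integrable hk g,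
    hB.ae_integrable hl g] with x hTx hSx hadd hkx hlx
  rw [_root_.add_apply, hadd, Pi.add_apply, hTx, hSx, ← integral_add hkx hlx]
  simp only [Pi.add_apply, add_mul]

lemma kernelBound_of_memLp (hk : StronglyMeasurable k) (hk₂ : MemLp k 2 (μ.prod ν)) :
    KernelBound k μ ν (eLpNorm k 2 (μ.prod ν)).toNNReal := by
  refine kernelBound_of_lintegral_sq_le fun g hg => ?_
  have hkm := hk.enorm
  rw [ENNReal.coe_toNNReal hk₂.eLpNorm_ne_top, eLpNorm_two_sq,
    lintegral_prod _ (hkm.pow_const 2).aemeasurable, ← lintegral_mul_const _ (by fun_prop)]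
  exact lintegral_mono fun x => lintegral_mul_sq_le (by fun_prop) (by fun_prop)

lemma kernelBound_of_schurTest [SFinite μ] (hk : StronglyMeasurable k)
    (hrow : ∀ᵐ x ∂μ, ∫⁻ y, ‖k (x, y)‖ₑ ∂ν ≤ A) (hcol : ∀ᵐ y ∂ν, ∫⁻ x, ‖k (x, y)‖ₑ ∂μ ≤ B) :
    KernelBound k μ ν (NNReal.sqrt (A * B)) := by
  refine kernelBound_of_lintegral_sq_le fun g hg => ?_
  have := hk.enorm
  have hrow_sq : ∀ᵐ x ∂μ,
      (∫⁻ y, ‖k (x, y)‖ₑ * g y ∂ν) ^ 2 ≤ A * ∫⁻ y, ‖k (x, y)‖ₑ * g y ^ 2 ∂ν := by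
    filter_upwards [hrow] with x hx
    have sqrt_sq (t : ℝ≥0∞) : (t ^ (1 / 2 : ℝ)) ^ 2 = t := by
      rw [← ENNReal.rpow_two, ← ENNReal.rpow_mul]; norm_num
    have cauchySchwarz := lintegral_mul_sq_le (μ := ν) (f := fun y => ‖k (x, y)‖ₑ ^ (1 / 2 : ℝ))
      (g := fun y => ‖k (x, y)‖ₑ ^ (1 / 2 : ℝ) * g y) (by fun_prop) (by fun_prop)
    simp only [← mul_assoc, ← sq, mul_pow, sqrt_sq] at cauchySchwarz
    exact cauchySchwarz.trans (by gcongr)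
  calc ∫⁻ x, (∫⁻ y, ‖k (x, y)‖ₑ * g y ∂ν) ^ 2 ∂μ
      ≤ ∫⁻ x, A * ∫⁻ y, ‖k (x, y)‖ₑ * g y ^ 2 ∂ν ∂μ := lintegral_mono_ae hrow_sq
    _ = A * ∫⁻ y, (∫⁻ x, ‖k (x, y)‖ₑ ∂μ) * g y ^ 2 ∂ν := by
      rw [lintegral_const_mul _ (by fun_prop), lintegral_lintegral_swap (by fun_prop)]
      congr! 3 with y
      rw [lintegral_mul_const _ (by fun_prop)]
    _ ≤ A * ∫⁻ y, B * g y ^ 2 ∂ν := by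
      gcongr 1
      refine lintegral_mono_ae ?_
      filter_upwards [hcol] with y hy
      gcongr
    _ = (NNReal.sqrt (A * B) : ℝ≥0∞) ^ 2 * ∫⁻ y, g y ^ 2 ∂ν := by
      rw [lintegral_const_mul _ (by fun_prop), ← mul_assoc, ← ENNReal.coe_pow, NNReal.sq_sqrt,
        ENNReal.coe_mul]

lemma HasIntegralKernel.sum_enorm_sq_le {T : Lp 𝕜 2 ν →L[𝕜] Lp 𝕜 2 μ}
    (hT : HasIntegralKernel T k) (hk : StronglyMeasurable k) {e : ι → Lp 𝕜 2 ν}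
    (he : Orthonormal 𝕜 e) (s : Finset ι) :
    ∑ i ∈ s, ‖T (e i)‖ₑ ^ 2 ≤ eLpNorm k 2 (μ.prod ν) ^ 2 := by
  calc ∑ i ∈ s, ‖T (e i)‖ₑ ^ 2
      = ∑ i ∈ s, ∫⁻ x, ‖∫ y, k (x, y) * e i y ∂ν‖ₑ ^ 2 ∂μ := by
        refine Finset.sum_congr rfl fun i _ => ?_
        rw [Lp.enorm_def, eLpNorm_congr_ae (hT (e i)), eLpNorm_two_sq]
    _ = ∫⁻ x, ∑ i ∈ s, ‖∫ y, k (x, y) * e i y ∂ν‖ₑ ^ 2 ∂μ :=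
        (lintegral_finsetSum _ fun i _ => (stronglyMeasurable_kernel_mul hk
          (e i)).integral_prod_right'.enorm.pow_const 2).symm
    _ ≤ ∫⁻ x, eLpNorm (fun y => k (x, y)) 2 ν ^ 2 ∂μ :=
        lintegral_mono fun x => sum_enorm_integral_mul_sq_le he
          (hk.comp_measurable measurable_prodMk_left).aestronglyMeasurable s
    _ = eLpNorm k 2 (μ.prod ν) ^ 2 := by
        simp only [eLpNorm_two_sq]
        rw [lintegral_prod _ (hk.enorm.pow_const 2).aemeasurable]

theorem HasIntegralKernel.isCompactOperator_of_memLp {T : Lp 𝕜 2 ν →L[𝕜] Lp 𝕜 2 μ}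
    (hT : HasIntegralKernel T k) (hk : StronglyMeasurable k) (hk₂ : MemLp k 2 (μ.prod ν)) :
    IsCompactOperator T := by
  obtain ⟨w, b, -⟩ := exists_hilbertBasis 𝕜 (Lp 𝕜 2 ν)
  refine isCompactOperator_of_summable_norm_sq b (summable_of_sum_le
    (c := (eLpNorm k 2 (μ.prod ν) ^ 2).toReal) (fun _ => sq_nonneg _) fun s => ?_)
  have := ENNReal.toReal_mono (ENNReal.pow_ne_top hk₂.eLpNorm_ne_top)
    (hT.sum_enorm_sq_le hk b.orthonormal s)
  rw [ENNReal.toReal_sum fun i _ => ENNReal.pow_ne_top enorm_ne_top] at this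
  simpa only [ENNReal.toReal_pow, toReal_enorm] using this

theorem exists_hasIntegralKernel_isCompactOperator [SFinite μ] (hk : StronglyMeasurable k)
    (hsplit : ∀ ε : ℝ≥0, 0 < ε → ∃ s : Set (X × Y), MeasurableSet s ∧
      MemLp (s.indicator k) 2 (μ.prod ν) ∧
      (∀ᵐ x ∂μ, ∫⁻ y, ‖sᶜ.indicator k (x, y)‖ₑ ∂ν ≤ ε) ∧
      ∀ᵐ y ∂ν, ∫⁻ x, ‖sᶜ.indicator k (x, y)‖ₑ ∂μ ≤ ε) :
    ∃ T : Lp 𝕜 2 ν →L[𝕜] Lp 𝕜 2 μ, HasIntegralKernel T k ∧ IsCompactOperator T := by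
  have happrox (ε : ℝ≥0) (hε : 0 < ε) : ∃ T S : Lp 𝕜 2 ν →L[𝕜] Lp 𝕜 2 μ,
      HasIntegralKernel T k ∧ IsCompactOperator S ∧ ‖T - S‖ ≤ ε := by
    obtain ⟨s, hs, hsL, hrow, hcol⟩ := hsplit ε hε
    have hks := hk.indicator hs
    have hkc := hk.indicator hs.compl
    have hboundS := kernelBound_of_memLp hks hsL
    have hboundR := kernelBound_of_schurTest hkc hrow hcol
    rw [NNReal.sqrt_mul_self] at hboundR
    obtain ⟨S, hS, -⟩ := hboundS.exists_hasIntegralKernel hks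
    obtain ⟨R, hR, hRε⟩ := hboundR.exists_hasIntegralKernel hkc
    refine ⟨S + R, S, ?_, hS.isCompactOperator_of_memLp hks hsL, by simpa using hRε⟩
    simpa only [indicator_self_add_compl] using hS.add hks hkc hboundS hboundR hR
  obtain ⟨T, -, hT, -⟩ := happrox 1 one_pos
  refine ⟨T, hT, ?_⟩
  have hclosed : IsClosed {S : Lp 𝕜 2 ν →L[𝕜] Lp 𝕜 2 μ | IsCompactOperator S} :=
    isClosed_setOfPred_isCompactOperator
  refine hclosed.closure_subset (Metric.mem_closure_iff.2 fun ε hε => ?_)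
  obtain ⟨T', S, hT', hS, hT'S⟩ := happrox (ε / 2).toNNReal (by simpa using hε)
  refine ⟨S, hS, ?_⟩
  rw [hT.unique hT', dist_eq_norm]
  refine hT'S.trans_lt ?_
  rw [Real.coe_toNNReal _ (half_pos hε).le]
  exact half_lt_self hε

end IntegralOperators

section Trigonometry

lemma sin_half_mul_sin_half (p q : ℝ) :
    sin (p / 2) * sin (q / 2) = cos ((p - q) / 4) ^ 2 - cos ((p + q) / 4) ^ 2 := by
  have hp : p / 2 = (p + q) / 4 + (p - q) / 4 := by ring
  have hq : q / 2 = (p + q) / 4 - (p - q) / 4 := by ring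
  rw [hp, hq, sin_add, sin_sub]
  linear_combination cos ((p - q) / 4) ^ 2 * sin_sq_add_cos_sq ((p + q) / 4)
    - cos ((p + q) / 4) ^ 2 * sin_sq_add_cos_sq ((p - q) / 4)

lemma cos_half_add_cos_half (p q : ℝ) :
    cos (p / 2) + cos (q / 2) = 2 * cos ((p + q) / 4) * cos ((p - q) / 4) := by
  rw [cos_add_cos]
  ring_nf

-- Shared by both resonant parametrizations, with `(a, b) = ((p + q) / 4, (p - q) / 4)` for `K₁`
-- and the two entries swapped for `h`.
lemma sin_add_mul_sin_sub_eq_of_sin_sq_eq {a b θ : ℝ} (ha : cos a ≠ 0)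
    (hθ : sin θ ^ 2 = (tan a * cos b) ^ 2) :
    sin (a + θ) * sin (a - θ) = tan a ^ 2 * (cos a ^ 2 - cos b ^ 2) := by
  have hsq : sin (a + θ) * sin (a - θ) = sin a ^ 2 - sin θ ^ 2 := by
    rw [sin_add, sin_sub]
    linear_combination sin a ^ 2 * sin_sq_add_cos_sq θ - sin θ ^ 2 * sin_sq_add_cos_sq a
  rw [hsq, hθ, tan_eq_sin_div_cos]
  field_simp

lemma sin_half_pos {p : ℝ} (hp : p ∈ Ioo 0 (2 * π)) : 0 < sin (p / 2) :=
  sin_pos_of_pos_of_lt_pi (by linarith [hp.1]) (by linarith [hp.2])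

lemma sin_half_nonneg {p : ℝ} (hp : p ∈ Icc 0 (2 * π)) : 0 ≤ sin (p / 2) :=
  sin_nonneg_of_nonneg_of_le_pi (by linarith [hp.1]) (by linarith [hp.2])

lemma ω_nonneg (p : ℝ) : 0 ≤ ω p := abs_nonneg _

lemma ω_le_one (p : ℝ) : ω p ≤ 1 := abs_sin_le_one _

lemma ω_pos {p : ℝ} (hp : p ∈ Ioo 0 (2 * π)) : 0 < ω p := abs_pos.2 (sin_half_pos hp).ne'

lemma continuous_ω : Continuous ω := by unfold ω; fun_prop

lemma cos_quarter_sub_pos {p q : ℝ} (hp : p ∈ Ioo 0 (2 * π)) (hq : q ∈ Icc 0 (2 * π)) :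
    0 < cos ((p - q) / 4) :=
  cos_pos_of_mem_Ioo ⟨by linarith [hp.1, hq.2], by linarith [hp.2, hq.1]⟩

lemma abs_cos_quarter_add_le {p q : ℝ} (hp : p ∈ Ioo 0 (2 * π)) (hq : q ∈ Icc 0 (2 * π)) :
    |cos ((p + q) / 4)| ≤ cos ((p - q) / 4) := by
  refine abs_le_of_sq_le_sq ?_ (cos_quarter_sub_pos hp hq).le
  linarith [sin_half_mul_sin_half p q, mul_nonneg (sin_half_pos hp).le (sin_half_nonneg hq)]

lemma abs_sin_quarter_sub_le {p q : ℝ} (hp : p ∈ Ioo 0 (2 * π)) (hq : q ∈ Icc 0 (2 * π)) :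
    |sin ((p - q) / 4)| ≤ sin ((p + q) / 4) := by
  refine abs_le_of_sq_le_sq ?_ (sin_nonneg_of_nonneg_of_le_pi ?_ ?_)
  · linarith [sin_half_mul_sin_half p q, mul_nonneg (sin_half_pos hp).le (sin_half_nonneg hq),
      sin_sq_add_cos_sq ((p + q) / 4), sin_sq_add_cos_sq ((p - q) / 4)]
  all_goals linarith [hp.1, hp.2, hq.1, hq.2]

end Trigonometry

section ResonantPhase

variable {p q δ : ℝ}

/-- The sine of the half-deviation of `p₂` and `p₃` from their mean: by definition
`p2aux p q = (p + q) / 2 + 2 * arcsin (resonantSine p q)`. -/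
def resonantSine (p q : ℝ) : ℝ := tan ((p + q) / 4) * cos ((p - q) / 4)

/-- The angle `θ` with `p₂ = (p + q) / 2 + 2θ` and `p₃ = (p + q) / 2 - 2θ`. The kernel `K₁` is
singular where `θ` reaches `±π / 2`. -/
def resonantPhase (p q : ℝ) : ℝ := arcsin (resonantSine p q)

lemma p2aux_eq (p q : ℝ) : p2aux p q = (p + q) / 2 + 2 * resonantPhase p q := rfl

lemma resonantPhase_comm (p q : ℝ) : resonantPhase p q = resonantPhase q p := by
  rw [resonantPhase, resonantPhase, resonantSine, resonantSine, add_comm p q,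
    ← cos_neg ((p - q) / 4), ← neg_div, neg_sub]

lemma Fminus_comm (p q : ℝ) : Fminus p q = Fminus q p := by
  unfold Fminus
  ring

lemma Fminus_eq (p q : ℝ) : Fminus p q =
    4 * (cos ((p + q) / 4) ^ 2 - sin ((p + q) / 4) ^ 2 * cos ((p - q) / 4) ^ 2) := by
  rw [Fminus, cos_half_add_cos_half, mul_assoc 4, sin_half_mul_sin_half]
  linear_combination 4 * cos ((p - q) / 4) ^ 2 * sin_sq_add_cos_sq ((p + q) / 4)

lemma cos_quarter_add_ne_zero_of_Fminus_pos (h : 0 < Fminus p q) : cos ((p + q) / 4) ≠ 0 := by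
  intro hc
  rw [Fminus_eq, hc] at h
  linarith [mul_nonneg (sq_nonneg (sin ((p + q) / 4))) (sq_nonneg (cos ((p - q) / 4)))]

lemma Fminus_eq_mul_one_sub_resonantSine_sq (hc : cos ((p + q) / 4) ≠ 0) :
    Fminus p q = (2 * cos ((p + q) / 4)) ^ 2 * (1 - resonantSine p q ^ 2) := by
  rw [Fminus_eq, resonantSine, tan_eq_sin_div_cos]
  field_simp
  ring

lemma abs_resonantSine_lt_one (h : 0 < Fminus p q) : |resonantSine p q| < 1 := by
  have hc := cos_quarter_add_ne_zero_of_Fminus_pos h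
  rw [Fminus_eq_mul_one_sub_resonantSine_sq hc, mul_pos_iff_of_pos_left (by positivity)] at h
  exact (sq_lt_one_iff_abs_lt_one _).1 (by linarith)

lemma sin_resonantPhase (h : 0 < Fminus p q) : sin (resonantPhase p q) = resonantSine p q :=
  have hτ := abs_lt.1 (abs_resonantSine_lt_one h)
  sin_arcsin hτ.1.le hτ.2.le

lemma cos_resonantPhase_pos (h : 0 < Fminus p q) : 0 < cos (resonantPhase p q) := by
  rw [resonantPhase, cos_arcsin, sqrt_pos]
  linarith [(sq_lt_one_iff_abs_lt_one _).2 (abs_resonantSine_lt_one h)]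

lemma sqrt_Fminus (h : 0 < Fminus p q) :
    √(Fminus p q) = 2 * |cos ((p + q) / 4)| * cos (resonantPhase p q) := by
  rw [Fminus_eq_mul_one_sub_resonantSine_sq (cos_quarter_add_ne_zero_of_Fminus_pos h),
    sqrt_mul (sq_nonneg _), sqrt_sq_eq_abs, abs_mul, abs_two, resonantPhase, cos_arcsin]

lemma ω_p2aux_mul_ω_p3 (h : 0 < Fminus p q) :
    ω (p2aux p q) * ω (p + q - p2aux p q) = tan ((p + q) / 4) ^ 2 * (ω p * ω q) := by
  have hp₂ : p2aux p q / 2 = (p + q) / 4 + resonantPhase p q := by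
    rw [p2aux_eq]; ring
  have hp₃ : (p + q - p2aux p q) / 2 = (p + q) / 4 - resonantPhase p q := by
    rw [p2aux_eq]; ring
  simp only [ω]
  rw [← abs_mul, ← abs_mul, hp₂, hp₃, sin_add_mul_sin_sub_eq_of_sin_sq_eq
    (cos_quarter_add_ne_zero_of_Fminus_pos h) (congrArg (· ^ 2) (sin_resonantPhase h)),
    sin_half_mul_sin_half, abs_mul, abs_sq, abs_sub_comm]

lemma sin_mul_cos_le_of_Fminus_pos (h : 0 < Fminus p q) :
    sin ((p + q) / 4) * cos ((p - q) / 4) ≤ |cos ((p + q) / 4)| := by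
  rw [Fminus_eq] at h
  refine le_of_abs_le (sq_le_sq.1 ?_)
  linarith [mul_pow (sin ((p + q) / 4)) (cos ((p - q) / 4)) 2]

lemma ω_p2aux_mul_ω_p3_div_sqrt_Fminus_le (hp : p ∈ Ioo 0 (2 * π)) (hq : q ∈ Ioo 0 (2 * π))
    (h : 0 < Fminus p q) :
    ω (p2aux p q) * ω (p + q - p2aux p q) / √(Fminus p q) ≤
      cos ((p - q) / 4) / cos (resonantPhase p q) := by
  have hq' := Ioo_subset_Icc_self hq
  have hc : 0 < |cos ((p + q) / 4)| := abs_pos.2 (cos_quarter_add_ne_zero_of_Fminus_pos h)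
  have hD := cos_quarter_sub_pos hp hq'
  have hS : 0 ≤ sin ((p + q) / 4) := (abs_nonneg _).trans (abs_sin_quarter_sub_le hp hq')
  have hωω : ω p * ω q ≤ cos ((p + q) / 4) ^ 2 * cos ((p - q) / 4) ^ 2 := by
    rw [ω, ω, abs_of_pos (sin_half_pos hp), abs_of_pos (sin_half_pos hq), sin_half_mul_sin_half]
    rw [Fminus_eq] at h
    linear_combination h / 4 - cos ((p - q) / 4) ^ 2 * sin_sq_add_cos_sq ((p + q) / 4)
  rw [sqrt_Fminus h, ← div_div]
  refine div_le_div_of_nonneg_right ?_ (cos_resonantPhase_pos h).le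
  rw [div_le_iff₀ (by positivity), ω_p2aux_mul_ω_p3 h]
  calc tan ((p + q) / 4) ^ 2 * (ω p * ω q)
      ≤ tan ((p + q) / 4) ^ 2 * (cos ((p + q) / 4) ^ 2 * cos ((p - q) / 4) ^ 2) := by gcongr
    _ = sin ((p + q) / 4) * cos ((p - q) / 4) * (sin ((p + q) / 4) * cos ((p - q) / 4)) := by
        rw [← mul_assoc, ← mul_pow, tan_mul_cos (abs_pos.1 hc)]
        ring
    _ ≤ |cos ((p + q) / 4)| * (1 * cos ((p - q) / 4)) :=
        mul_le_mul (sin_mul_cos_le_of_Fminus_pos h) (by gcongr; exact sin_le_one _)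
          (by positivity) hc.le
    _ ≤ cos ((p - q) / 4) * (2 * |cos ((p + q) / 4)|) := by nlinarith [mul_pos hD hc]

/-- The partial derivative of `resonantSine` in its second variable. -/
def resonantSineDeriv (p q : ℝ) : ℝ :=
  (cos ((p - q) / 4) / cos ((p + q) / 4) ^ 2 + tan ((p + q) / 4) * sin ((p - q) / 4)) / 4

lemma hasDerivAt_resonantSine (hc : cos ((p + q) / 4) ≠ 0) :
    HasDerivAt (resonantSine p) (resonantSineDeriv p q) q := by
  have hadd : HasDerivAt (fun q : ℝ => (p + q) / 4) (1 / 4) q :=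
    ((hasDerivAt_id q).const_add p).div_const 4
  have hsub : HasDerivAt (fun q : ℝ => (p - q) / 4) (-1 / 4) q :=
    ((hasDerivAt_id q).const_sub p).div_const 4
  refine (((hasDerivAt_tan hc).comp q hadd).mul hsub.cos).congr_deriv ?_
  simp only [resonantSineDeriv, Function.comp_apply]
  ring

lemma cos_quarter_sub_le_resonantSineDeriv (hp : p ∈ Ioo 0 (2 * π)) (hq : q ∈ Ioo 0 (2 * π))
    (hc : cos ((p + q) / 4) ≠ 0) : cos ((p - q) / 4) / 4 ≤ resonantSineDeriv p q := by
  have hq' := Ioo_subset_Icc_self hq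
  have hcross : -(sin ((p + q) / 4) * cos ((p - q) / 4)) ≤
      cos ((p + q) / 4) * sin ((p - q) / 4) := by
    refine (abs_le.1 ?_).1
    rw [abs_mul, mul_comm (sin _)]
    exact mul_le_mul (abs_cos_quarter_add_le hp hq') (abs_sin_quarter_sub_le hp hq')
      (abs_nonneg _) (cos_quarter_sub_pos hp hq').le
  have hS : 0 ≤ sin ((p + q) / 4) := (abs_nonneg _).trans (abs_sin_quarter_sub_le hp hq')
  rw [resonantSineDeriv, tan_eq_sin_div_cos]
  refine div_le_div_of_nonneg_right ?_ (by norm_num)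
  have hcommon : cos ((p - q) / 4) / cos ((p + q) / 4) ^ 2 +
      sin ((p + q) / 4) / cos ((p + q) / 4) * sin ((p - q) / 4) =
      (cos ((p - q) / 4) + sin ((p + q) / 4) * (cos ((p + q) / 4) * sin ((p - q) / 4))) /
        cos ((p + q) / 4) ^ 2 := by
    field_simp
  rw [hcommon, le_div_iff₀ (by positivity)]
  linear_combination sin ((p + q) / 4) * hcross +
    cos ((p - q) / 4) * sin_sq_add_cos_sq ((p + q) / 4)

lemma hasDerivAt_resonantPhase (h : 0 < Fminus p q) :
    HasDerivAt (resonantPhase p) (resonantSineDeriv p q / cos (resonantPhase p q)) q := by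
  have hτ := abs_lt.1 (abs_resonantSine_lt_one h)
  refine ((hasDerivAt_arcsin hτ.1.ne' hτ.2.ne).comp q (hasDerivAt_resonantSine
    (cos_quarter_add_ne_zero_of_Fminus_pos h))).congr_deriv ?_
  rw [resonantPhase, cos_arcsin, one_div_mul_eq_div]

lemma strictMonoOn_resonantSine (hp : p ∈ Ioo 0 (2 * π)) {a b : ℝ}
    (hab : Ioo a b ⊆ Ioo 0 (2 * π)) (hc : ∀ q ∈ Ioo a b, cos ((p + q) / 4) ≠ 0) :
    StrictMonoOn (resonantSine p) (Ioo a b) := by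
  refine strictMonoOn_of_hasDerivWithinAt_pos (f' := resonantSineDeriv p) (convex_Ioo a b)
    (fun q hq => (hasDerivAt_resonantSine (hc q hq)).continuousAt.continuousWithinAt) ?_ ?_
  all_goals
    intro q hq
    rw [interior_Ioo] at hq
  · exact (hasDerivAt_resonantSine (hc q hq)).hasDerivWithinAt
  · have hD := cos_quarter_sub_pos hp (Ioo_subset_Icc_self (hab hq))
    exact (by positivity : 0 < cos ((p - q) / 4) / 4).trans_le
      (cos_quarter_sub_le_resonantSineDeriv hp (hab hq) (hc q hq))

lemma injOn_resonantPhase (hp : p ∈ Ioo 0 (2 * π)) {a b : ℝ}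
    (hab : Ioo a b ⊆ Ioo 0 (2 * π)) (hc : ∀ q ∈ Ioo a b, cos ((p + q) / 4) ≠ 0) :
    InjOn (resonantPhase p) (Ioo a b ∩ {q | 0 < Fminus p q}) := by
  rintro q ⟨hq, hFq⟩ q' ⟨hq', hFq'⟩ hqq'
  refine (strictMonoOn_resonantSine hp hab hc).injOn hq hq' ?_
  rw [← sin_resonantPhase hFq, ← sin_resonantPhase hFq', hqq']

lemma setLIntegral_abs_deriv_le_volume {f f' : ℝ → ℝ} {s t : Set ℝ} (hs : MeasurableSet s)
    (hf : ∀ x ∈ s, HasDerivWithinAt f (f' x) s x) (hinj : InjOn f s) (hst : MapsTo f s t) :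
    ∫⁻ x in s, ENNReal.ofReal |f' x| ≤ volume t := by
  have himage := lintegral_image_eq_lintegral_abs_deriv_mul hs hf hinj 1
  simp only [Pi.one_apply, mul_one, setLIntegral_one] at himage
  exact himage.symm.trans_le (measure_mono hst.image_subset)

/-- The part of the support of `K₁` on which the phase is within `δ` of `±π / 2`. -/
def singularSet (δ : ℝ) : Set (ℝ × ℝ) :=
  {z | 0 < Fminus z.1 z.2 ∧ π / 2 - δ < |resonantPhase z.1 z.2|}

lemma measurable_tan : Measurable tan := by
  simp only [funext tan_eq_sin_div_cos]
  fun_prop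

lemma measurable_Fminus : Measurable fun z : ℝ × ℝ => Fminus z.1 z.2 := by
  unfold Fminus
  fun_prop

lemma measurable_resonantPhase : Measurable fun z : ℝ × ℝ => resonantPhase z.1 z.2 := by
  have := measurable_tan
  unfold resonantPhase resonantSine
  exact continuous_arcsin.measurable.comp (by fun_prop)

lemma measurableSet_singularSet (δ : ℝ) : MeasurableSet (singularSet δ) :=
  (measurableSet_lt measurable_const measurable_Fminus).inter
    (measurableSet_lt measurable_const measurable_resonantPhase.abs)

lemma volume_near_pi_div_two_le (hδ : 0 ≤ δ) :
    volume {x ∈ Icc (-(π / 2)) (π / 2) | π / 2 - δ < |x|} ≤ ENNReal.ofReal (2 * δ) := by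
  have hsub : {x ∈ Icc (-(π / 2)) (π / 2) | π / 2 - δ < |x|} ⊆
      Icc (-(π / 2)) (-(π / 2) + δ) ∪ Icc (π / 2 - δ) (π / 2) := by
    rintro x ⟨hx, hδx⟩
    rcases lt_abs.1 hδx with h | h
    · exact .inr ⟨h.le, hx.2⟩
    · exact .inl ⟨hx.1, by linarith⟩
  refine (measure_mono hsub).trans ((measure_union_le _ _).trans_eq ?_)
  rw [volume_Icc, volume_Icc, ← ENNReal.ofReal_add (by linarith) (by linarith)]
  congr 1
  ring

lemma lintegral_Ioo_inter_singularSet_le (hδ : 0 ≤ δ) (hp : p ∈ Ioo 0 (2 * π)) {a b : ℝ}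
    (hab : Ioo a b ⊆ Ioo 0 (2 * π)) (hc : ∀ q ∈ Ioo a b, cos ((p + q) / 4) ≠ 0) :
    ∫⁻ q in Ioo a b ∩ Prod.mk p ⁻¹' singularSet δ,
      ENNReal.ofReal (cos ((p - q) / 4) / cos (resonantPhase p q)) ≤ ENNReal.ofReal (8 * δ) := by
  have hs : MeasurableSet (Ioo a b ∩ Prod.mk p ⁻¹' singularSet δ) :=
    measurableSet_Ioo.inter (measurable_prodMk_left (measurableSet_singularSet δ))
  calc ∫⁻ q in Ioo a b ∩ Prod.mk p ⁻¹' singularSet δ,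
        ENNReal.ofReal (cos ((p - q) / 4) / cos (resonantPhase p q))
      ≤ ∫⁻ q in Ioo a b ∩ Prod.mk p ⁻¹' singularSet δ,
          4 * ENNReal.ofReal |resonantSineDeriv p q / cos (resonantPhase p q)| := by
        refine setLIntegral_mono' hs fun q hq => ?_
        have hcos := cos_resonantPhase_pos hq.2.1
        rw [← ENNReal.ofReal_ofNat 4, ← ENNReal.ofReal_mul (by norm_num)]
        refine ENNReal.ofReal_le_ofReal (le_trans ?_
          (mul_le_mul_of_nonneg_left (le_abs_self _) (by norm_num)))
        rw [← mul_div_assoc]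
        gcongr
        linarith [cos_quarter_sub_le_resonantSineDeriv hp (hab hq.1) (hc q hq.1)]
    _ = 4 * ∫⁻ q in Ioo a b ∩ Prod.mk p ⁻¹' singularSet δ,
          ENNReal.ofReal |resonantSineDeriv p q / cos (resonantPhase p q)| :=
        lintegral_const_mul' _ _ (by norm_num)
    _ ≤ 4 * volume {x ∈ Icc (-(π / 2)) (π / 2) | π / 2 - δ < |x|} := by
        gcongr
        exact setLIntegral_abs_deriv_le_volume hs
          (fun q hq => (hasDerivAt_resonantPhase hq.2.1).hasDerivWithinAt)
          ((injOn_resonantPhase hp hab hc).mono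
            (inter_subset_inter_right _ fun q hq => hq.1))
          fun q hq => ⟨arcsin_mem_Icc _, hq.2.2⟩
    _ ≤ 4 * ENNReal.ofReal (2 * δ) := by
        gcongr
        exact volume_near_pi_div_two_le hδ
    _ = ENNReal.ofReal (8 * δ) := by
        rw [← ENNReal.ofReal_ofNat 4, ← ENNReal.ofReal_mul (by norm_num)]
        congr 1
        ring

-- `tan ((p + q) / 4)` has its pole at `q = 2π - p`, and the phase is monotone on either side.
lemma lintegral_singularSet_le (hδ : 0 ≤ δ) (hp : p ∈ Ioo 0 (2 * π)) :
    ∫⁻ q in Ioo 0 (2 * π) ∩ Prod.mk p ⁻¹' singularSet δ,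
      ENNReal.ofReal (cos ((p - q) / 4) / cos (resonantPhase p q)) ≤ ENNReal.ofReal (16 * δ) := by
  have hcover : Ioo 0 (2 * π) ∩ Prod.mk p ⁻¹' singularSet δ ⊆
      Ioo 0 (2 * π - p) ∩ Prod.mk p ⁻¹' singularSet δ ∪
        Ioo (2 * π - p) (2 * π) ∩ Prod.mk p ⁻¹' singularSet δ := by
    rintro q ⟨hq, hqδ⟩
    rcases lt_trichotomy q (2 * π - p) with hlt | rfl | hgt
    · exact .inl ⟨⟨hq.1, hlt⟩, hqδ⟩
    · refine absurd ?_ (cos_quarter_add_ne_zero_of_Fminus_pos hqδ.1)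
      rw [show (p + (2 * π - p)) / 4 = π / 2 by ring, cos_pi_div_two]
    · exact .inr ⟨⟨hgt, hq.2⟩, hqδ⟩
  refine (lintegral_mono_set hcover).trans ((lintegral_union_le _ _ _).trans ?_)
  have hleft := lintegral_Ioo_inter_singularSet_le hδ hp (a := 0) (b := 2 * π - p)
    (Ioo_subset_Ioo_right (by linarith [hp.1]))
    fun q hq => (cos_pos_of_mem_Ioo ⟨by linarith [hp.1, hq.1, pi_pos],
      by linarith [hq.2]⟩).ne'
  have hright := lintegral_Ioo_inter_singularSet_le hδ hp (a := 2 * π - p) (b := 2 * π)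
    (Ioo_subset_Ioo_left (by linarith [hp.2]))
    fun q hq => (cos_neg_of_pi_div_two_lt_of_lt (by linarith [hq.1])
      (by linarith [hp.2, hq.2, pi_pos])).ne
  refine (add_le_add hleft hright).trans_eq ?_
  rw [← ENNReal.ofReal_add (by positivity) (by positivity)]
  congr 1
  ring

end ResonantPhase

section CollisionFrequency

variable {β γ p q : ℝ}

lemma fRJ_pos (hβ : 0 ≤ β) (hγ : 0 < γ) (p : ℝ) : 0 < fRJ β γ p := by
  have := ω_nonneg p
  unfold fRJ
  positivity

lemma fRJ_le_one_div (hβ : 0 ≤ β) (hγ : 0 < γ) (p : ℝ) : fRJ β γ p ≤ 1 / γ :=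
  one_div_le_one_div_of_le hγ (le_add_of_nonneg_left (mul_nonneg hβ (ω_nonneg p)))

lemma one_div_le_fRJ (hβ : 0 ≤ β) (hγ : 0 < γ) (p : ℝ) : 1 / (β + γ) ≤ fRJ β γ p := by
  have := ω_nonneg p
  refine one_div_le_one_div_of_le (by positivity) ?_
  gcongr
  exact mul_le_of_le_one_right hβ (ω_le_one p)

lemma continuous_fRJ (hβ : 0 ≤ β) (hγ : 0 < γ) : Continuous (fRJ β γ) :=
  continuous_const.div₀ ((continuous_ω.const_mul β).add continuous_const) fun p =>
    (add_pos_of_nonneg_of_pos (mul_nonneg hβ (ω_nonneg p)) hγ).ne'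

lemma Fplus_eq (p q : ℝ) : Fplus p q =
    4 * (cos ((p - q) / 4) ^ 2 - cos ((p + q) / 4) ^ 2 * sin ((p - q) / 4) ^ 2) := by
  rw [Fplus, cos_half_add_cos_half, mul_assoc 4, sin_half_mul_sin_half]
  linear_combination 4 * cos ((p + q) / 4) ^ 2 * sin_sq_add_cos_sq ((p - q) / 4)

lemma Fplus_pos (hp : p ∈ Ioo 0 (2 * π)) (hq : q ∈ Icc 0 (2 * π)) : 0 < Fplus p q := by
  have hD := cos_quarter_sub_pos hp hq
  have hcD : cos ((p + q) / 4) ^ 2 ≤ cos ((p - q) / 4) ^ 2 :=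
    sq_le_sq.2 ((abs_cos_quarter_add_le hp hq).trans (le_abs_self _))
  calc 0 < 4 * cos ((p - q) / 4) ^ 4 := by positivity
    _ = 4 * (cos ((p - q) / 4) ^ 2 - cos ((p - q) / 4) ^ 2 * sin ((p - q) / 4) ^ 2) := by
        linear_combination 4 * cos ((p - q) / 4) ^ 2 * sin_sq_add_cos_sq ((p - q) / 4)
    _ ≤ Fplus p q := by
        rw [Fplus_eq]
        gcongr

lemma sqrt_Fplus_le_two (p q : ℝ) : √(Fplus p q) ≤ 2 := by
  rw [sqrt_le_left (by norm_num), Fplus_eq]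
  linarith [cos_sq_le_one ((p - q) / 4),
    mul_nonneg (sq_nonneg (cos ((p + q) / 4))) (sq_nonneg (sin ((p - q) / 4)))]

lemma cos_abs_sub_div_four (p q : ℝ) : cos (|q - p| / 4) = cos ((p - q) / 4) := by
  rw [← cos_abs ((p - q) / 4), abs_div, abs_sub_comm, abs_of_pos (four_pos (α := ℝ))]

lemma tan_abs_sub_div_four_sq (p q : ℝ) : tan (|q - p| / 4) ^ 2 = tan ((p - q) / 4) ^ 2 := by
  rw [tan_eq_sin_div_cos, tan_eq_sin_div_cos, div_pow, div_pow, sin_sq, sin_sq,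
    cos_abs_sub_div_four]

lemma abs_tan_mul_cos_le_one (hp : p ∈ Ioo 0 (2 * π)) (hq : q ∈ Icc 0 (2 * π)) :
    |tan (|q - p| / 4) * cos ((p + q) / 4)| ≤ 1 := by
  have hD := cos_quarter_sub_pos hp hq
  calc |tan (|q - p| / 4) * cos ((p + q) / 4)|
      ≤ |tan (|q - p| / 4)| * |cos (|q - p| / 4)| := by
        rw [abs_mul, cos_abs_sub_div_four]
        exact mul_le_mul_of_nonneg_left ((abs_cos_quarter_add_le hp hq).trans (le_abs_self _))
          (abs_nonneg _)
    _ = |sin (|q - p| / 4)| := by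
        rw [← abs_mul, tan_mul_cos (by rw [cos_abs_sub_div_four]; exact hD.ne')]
    _ ≤ 1 := abs_sin_le_one _

lemma ω_resH_mul_ω_p3 (hp : p ∈ Ioo 0 (2 * π)) (hq : q ∈ Icc 0 (2 * π)) :
    ω (resH p q) * ω (p + resH p q - q) = tan ((p - q) / 4) ^ 2 * (ω p * ω q) := by
  set φ := arcsin (tan (|q - p| / 4) * cos ((p + q) / 4)) with hφ
  have hp₁ : resH p q / 2 = -((p - q) / 4 - φ) := by rw [resH, ← hφ]; ring
  have hp₃ : (p + resH p q - q) / 2 = (p - q) / 4 + φ := by rw [resH, ← hφ]; ring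
  have hsin : sin φ ^ 2 = (tan ((p - q) / 4) * cos ((p + q) / 4)) ^ 2 := by
    obtain ⟨hl, hu⟩ := abs_le.1 (abs_tan_mul_cos_le_one hp hq)
    rw [hφ, sin_arcsin hl hu, mul_pow, mul_pow, tan_abs_sub_div_four_sq]
  simp only [ω]
  rw [hp₁, hp₃, sin_neg, abs_neg, mul_comm, ← abs_mul, ← abs_mul,
    sin_add_mul_sin_sub_eq_of_sin_sq_eq (cos_quarter_sub_pos hp hq).ne' hsin,
    sin_half_mul_sin_half, abs_mul, abs_sq]

lemma sin_sq_mul_ω_le_ω_resH_mul_ω_p3 (hp : p ∈ Ioo 0 (2 * π)) (hq : q ∈ Icc 0 (2 * π)) :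
    sin ((p - q) / 4) ^ 2 * (ω p * ω q) ≤ ω (resH p q) * ω (p + resH p q - q) := by
  rw [ω_resH_mul_ω_p3 hp hq, ← tan_mul_cos (cos_quarter_sub_pos hp hq).ne', mul_pow]
  have := mul_nonneg (ω_nonneg p) (ω_nonneg q)
  gcongr
  exact mul_le_of_le_one_right (sq_nonneg _) (cos_sq_le_one _)

/-- The integrand of the collision frequency `afreq`. -/
def collisionIntegrand (β γ p q : ℝ) : ℝ :=
  ω (resH p q) * ω q * ω (p + resH p q - q) *
    (fRJ β γ (resH p q) * fRJ β γ q * fRJ β γ (p + resH p q - q)) / √(Fplus p q)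

lemma afreq_eq (β γ p : ℝ) :
    afreq β γ p = ω p / fRJ β γ p * ∫ q in (0 : ℝ)..(2 * π), collisionIntegrand β γ p q := rfl

lemma continuousOn_resH (hp : p ∈ Ioo 0 (2 * π)) : ContinuousOn (resH p) (Icc 0 (2 * π)) := by
  have htan : ContinuousOn (fun q => tan (|q - p| / 4)) (Icc 0 (2 * π)) := fun q hq =>
    ((continuousAt_tan.2 (by
      rw [cos_abs_sub_div_four]
      exact (cos_quarter_sub_pos hp hq).ne')).comp
        (f := fun q => |q - p| / 4) (by fun_prop)).continuousWithinAt
  unfold resH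
  exact (Continuous.continuousOn (by fun_prop)).add
    ((continuous_arcsin.comp_continuousOn (htan.mul (by fun_prop))).const_mul 2)

lemma intervalIntegrable_collisionIntegrand (hβ : 0 ≤ β) (hγ : 0 < γ)
    (hp : p ∈ Ioo 0 (2 * π)) :
    IntervalIntegrable (collisionIntegrand β γ p) volume 0 (2 * π) := by
  refine ContinuousOn.intervalIntegrable_of_Icc (by positivity) ?_
  have hω := continuous_ω
  have hf := continuous_fRJ hβ hγ
  have hp₁ := continuousOn_resH hp
  have hp₃ : ContinuousOn (fun q => p + resH p q - q) (Icc 0 (2 * π)) := by fun_prop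
  have hF : Continuous (Fplus p) := by unfold Fplus; fun_prop
  refine ContinuousOn.div ?_ hF.sqrt.continuousOn fun q hq => (sqrt_pos.2 (Fplus_pos hp hq)).ne'
  exact (((hω.comp_continuousOn hp₁).mul hω.continuousOn).mul (hω.comp_continuousOn hp₃)).mul
    (((hf.comp_continuousOn hp₁).mul hf.continuousOn).mul (hf.comp_continuousOn hp₃))

lemma le_collisionIntegrand (hβ : 0 ≤ β) (hγ : 0 < γ) (hp : p ∈ Ioo 0 (2 * π))
    (hq : q ∈ Icc 0 (2 * π)) :
    ω p / (2 * (β + γ) ^ 3) * (sin ((p - q) / 4) ^ 2 * sin (q / 2) ^ 2) ≤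
      collisionIntegrand β γ p q := by
  have hF : 0 < √(Fplus p q) := sqrt_pos.2 (Fplus_pos hp hq)
  have hfff : (1 / (β + γ)) * (1 / (β + γ)) * (1 / (β + γ)) ≤
      fRJ β γ (resH p q) * fRJ β γ q * fRJ β γ (p + resH p q - q) := by
    have hf := one_div_le_fRJ hβ hγ
    have hinv : 0 ≤ 1 / (β + γ) := by positivity
    have hpos (r : ℝ) : 0 ≤ fRJ β γ r := hinv.trans (hf r)
    exact mul_le_mul (mul_le_mul (hf _) (hf _) hinv (hpos _)) (hf _) hinv
      (mul_nonneg (hpos _) (hpos _))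
  have hωωω := mul_le_mul_of_nonneg_right (sin_sq_mul_ω_le_ω_resH_mul_ω_p3 hp hq) (ω_nonneg q)
  have hω := ω_nonneg
  calc ω p / (2 * (β + γ) ^ 3) * (sin ((p - q) / 4) ^ 2 * sin (q / 2) ^ 2)
      = sin ((p - q) / 4) ^ 2 * (ω p * ω q) * ω q *
          ((1 / (β + γ)) * (1 / (β + γ)) * (1 / (β + γ))) / 2 := by
        rw [← sq_abs (sin (q / 2)), ← ω]
        field_simp
    _ ≤ ω (resH p q) * ω (p + resH p q - q) * ω q *
          (fRJ β γ (resH p q) * fRJ β γ q * fRJ β γ (p + resH p q - q)) / √(Fplus p q) := by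
        have hω₁ := mul_nonneg (hω (resH p q)) (hω (p + resH p q - q))
        have hω₂ := mul_nonneg hω₁ (hω q)
        exact div_le_div₀ (mul_nonneg hω₂ (le_trans (by positivity) hfff))
          (mul_le_mul hωωω hfff (by positivity) hω₂) hF (sqrt_Fplus_le_two p q)
    _ = collisionIntegrand β γ p q := by
        rw [collisionIntegrand]
        ring

lemma sin_sq_quarter_sub (p q : ℝ) :
    sin ((p - q) / 4) ^ 2 = (1 - (cos (p / 2) * cos (q / 2) + sin (p / 2) * sin (q / 2))) / 2 := by
  rw [← cos_sub, sin_sq_eq_half_sub]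
  ring_nf

lemma integral_sin_sq_mul_sin_sq (p : ℝ) :
    ∫ q in (0 : ℝ)..(2 * π), sin ((p - q) / 4) ^ 2 * sin (q / 2) ^ 2 =
      (π - 8 / 3 * sin (p / 2)) / 2 := by
  have hprimitive (q : ℝ) : HasDerivAt (fun q => (q / 2 - sin (q / 2) * cos (q / 2)
      - 2 / 3 * cos (p / 2) * sin (q / 2) ^ 3
      - 2 * sin (p / 2) * (cos (q / 2) ^ 3 / 3 - cos (q / 2))) / 2)
      (sin ((p - q) / 4) ^ 2 * sin (q / 2) ^ 2) q := by
    have hhalf : HasDerivAt (fun q : ℝ => q / 2) (1 / 2) q := (hasDerivAt_id q).div_const 2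
    have hs := hhalf.sin
    have hc := hhalf.cos
    refine ((((hhalf.sub (hs.mul hc)).sub ((hs.pow 3).const_mul _)).sub
      ((((hc.pow 3).div_const 3).sub hc).const_mul _)).div_const 2).congr_deriv ?_
    rw [sin_sq_quarter_sub]
    push_cast
    linear_combination (sin (p / 2) * sin (q / 2) / 2 - 1 / 4) * sin_sq_add_cos_sq (q / 2)
  rw [intervalIntegral.integral_eq_sub_of_hasDerivAt (fun q _ => hprimitive q)
    (Continuous.intervalIntegrable (by fun_prop) _ _), mul_div_cancel_left₀ _ two_ne_zero]
  simp only [zero_div, sin_pi, cos_pi, sin_zero, cos_zero]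
  ring

theorem mul_ω_sq_le_afreq (hβ : 0 ≤ β) (hγ : 0 < γ) (hp : p ∈ Ioo 0 (2 * π)) :
    γ / (10 * (β + γ) ^ 3) * ω p ^ 2 ≤ afreq β γ p := by
  have hω := ω_nonneg p
  have hγf : γ ≤ 1 / fRJ β γ p := (le_one_div hγ (fRJ_pos hβ hγ p)).2 (fRJ_le_one_div hβ hγ p)
  have hfifth : 1 / 5 ≤ (π - 8 / 3 * sin (p / 2)) / 2 := by
    linarith [sin_le_one (p / 2), pi_gt_d2]
  have hintegral : ω p / (2 * (β + γ) ^ 3) * ((π - 8 / 3 * sin (p / 2)) / 2) ≤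
      ∫ q in (0 : ℝ)..(2 * π), collisionIntegrand β γ p q := by
    rw [← integral_sin_sq_mul_sin_sq, ← intervalIntegral.integral_const_mul]
    exact intervalIntegral.integral_mono_on (by positivity)
      (Continuous.intervalIntegrable (by fun_prop) _ _)
      (intervalIntegrable_collisionIntegrand hβ hγ hp) fun q hq => le_collisionIntegrand hβ hγ hp hq
  have hinv : 0 ≤ ω p * (1 / fRJ β γ p) := mul_nonneg hω (hγ.le.trans hγf)
  calc γ / (10 * (β + γ) ^ 3) * ω p ^ 2
      = ω p * γ * (ω p / (2 * (β + γ) ^ 3) * (1 / 5)) := by field_simp; ring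
    _ ≤ ω p * (1 / fRJ β γ p) * (ω p / (2 * (β + γ) ^ 3) * ((π - 8 / 3 * sin (p / 2)) / 2)) := by
        gcongr
    _ ≤ ω p * (1 / fRJ β γ p) * ∫ q in (0 : ℝ)..(2 * π), collisionIntegrand β γ p q := by
        gcongr
    _ = afreq β γ p := by rw [afreq_eq, mul_one_div]

lemma rpow_neg_half_mul_le_sqrt_inv {a c w : ℝ} (hc : 0 < c) (hw : 0 < w) (h : c * w ^ 2 ≤ a) :
    a ^ (-(1 : ℝ) / 2) * w ≤ √c⁻¹ := by
  have ha : 0 < a := (by positivity : 0 < c * w ^ 2).trans_le h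
  rw [neg_div, rpow_neg ha.le, ← sqrt_eq_rpow, inv_mul_le_iff₀ (sqrt_pos.2 ha), ← sqrt_mul ha.le,
    ← div_eq_mul_inv]
  exact le_sqrt_of_sq_le ((le_div_iff₀' hc).2 h)

lemma rpow_afreq_mul_ω_mem_Icc (hβ : 0 ≤ β) (hγ : 0 < γ) (hp : p ∈ Ioo 0 (2 * π)) :
    afreq β γ p ^ (-(1 : ℝ) / 2) * ω p ∈ Icc 0 √(γ / (10 * (β + γ) ^ 3))⁻¹ := by
  have hω := ω_pos hp
  have hlower := mul_ω_sq_le_afreq hβ hγ hp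
  have ha : 0 ≤ afreq β γ p := le_trans (by positivity) hlower
  exact ⟨mul_nonneg (rpow_nonneg ha _) hω.le,
    rpow_neg_half_mul_le_sqrt_inv (by positivity) hω hlower⟩

end CollisionFrequency

section WeightedKernel

open scoped NNReal

variable {β γ δ p q : ℝ}

/-- The weighted kernel `a(p)^{-1/2} K₁(p,q) a(q)^{-1/2}`. -/
def weightedK1 (β γ : ℝ) (z : ℝ × ℝ) : ℝ :=
  afreq β γ z.1 ^ (-(1 : ℝ) / 2) * K1 β γ z.1 z.2 * afreq β γ z.2 ^ (-(1 : ℝ) / 2)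

lemma weightedK1_swap (z : ℝ × ℝ) : weightedK1 β γ z.swap = weightedK1 β γ z := by
  have hK1 (p q : ℝ) : K1 β γ p q = K1 β γ q p := by
    rw [K1, K1, Fminus_comm, p2aux_eq, p2aux_eq, resonantPhase_comm, add_comm p q, mul_comm (ω p)]
  rw [weightedK1, weightedK1, hK1 z.swap.1, Prod.fst_swap, Prod.snd_swap]
  ring

lemma swap_mem_singularSet {z : ℝ × ℝ} : z.swap ∈ singularSet δ ↔ z ∈ singularSet δ := by
  simp only [singularSet, mem_ofPred_eq, Prod.fst_swap, Prod.snd_swap, Fminus_comm z.2,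
    resonantPhase_comm z.2]

lemma measurable_fRJ (β γ : ℝ) : Measurable (fRJ β γ) := by
  have := continuous_ω.measurable
  unfold fRJ
  fun_prop

lemma measurable_resH : Measurable fun z : ℝ × ℝ => resH z.1 z.2 := by
  have := measurable_tan
  have := continuous_arcsin.measurable
  unfold resH
  fun_prop

lemma measurable_afreq (β γ : ℝ) : Measurable (afreq β γ) := by
  have hω := continuous_ω.measurable
  have hf := measurable_fRJ β γ
  have hintegrand : Measurable fun z : ℝ × ℝ => collisionIntegrand β γ z.1 z.2 := by
    have hresH := measurable_resH
    have hF : Measurable fun z : ℝ × ℝ => Fplus z.1 z.2 := by unfold Fplus; fun_prop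
    unfold collisionIntegrand
    fun_prop
  simp only [funext (afreq_eq β γ), intervalIntegral.integral_of_le two_pi_pos.le]
  exact (hω.div hf).mul hintegrand.stronglyMeasurable.integral_prod_right'.measurable

lemma measurable_weightedK1 (β γ : ℝ) : Measurable (weightedK1 β γ) := by
  have ha := measurable_afreq β γ
  have hK1 : Measurable fun z : ℝ × ℝ => K1 β γ z.1 z.2 := by
    have hω := continuous_ω.measurable
    have hf := measurable_fRJ β γ
    have hF := measurable_Fminus
    have hp₂ : Measurable fun z : ℝ × ℝ => p2aux z.1 z.2 := by
      have := measurable_resonantPhase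
      simp only [p2aux_eq]
      fun_prop
    unfold K1
    exact Measurable.ite (measurableSet_lt measurable_const hF) (by fun_prop) measurable_const
  unfold weightedK1
  fun_prop

lemma weightedK1_eq_zero_of_Fminus_nonpos (h : Fminus p q ≤ 0) : weightedK1 β γ (p, q) = 0 := by
  simp [weightedK1, K1, h.not_gt]

lemma weightedK1_eq_of_Fminus_pos (h : 0 < Fminus p q) : weightedK1 β γ (p, q) =
    (afreq β γ p ^ (-(1 : ℝ) / 2) * ω p) * (afreq β γ q ^ (-(1 : ℝ) / 2) * ω q) *
      (fRJ β γ (p2aux p q) * fRJ β γ (p + q - p2aux p q)) *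
      (ω (p2aux p q) * ω (p + q - p2aux p q) / √(Fminus p q)) := by
  rw [weightedK1, K1, if_pos h]
  ring

lemma abs_weightedK1_le (hβ : 0 ≤ β) (hγ : 0 < γ) (hp : p ∈ Ioo 0 (2 * π))
    (hq : q ∈ Ioo 0 (2 * π)) (h : 0 < Fminus p q) :
    |weightedK1 β γ (p, q)| ≤
      10 * (β + γ) ^ 3 / γ ^ 3 * (cos ((p - q) / 4) / cos (resonantPhase p q)) := by
  obtain ⟨hwp, hwp_le⟩ := rpow_afreq_mul_ω_mem_Icc hβ hγ hp
  obtain ⟨hwq, hwq_le⟩ := rpow_afreq_mul_ω_mem_Icc hβ hγ hq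
  have hf (r : ℝ) : 0 ≤ fRJ β γ r := (fRJ_pos hβ hγ r).le
  have hf_le := fRJ_le_one_div hβ hγ
  have hω := mul_nonneg (ω_nonneg (p2aux p q)) (ω_nonneg (p + q - p2aux p q))
  have hresonant : 0 ≤ ω (p2aux p q) * ω (p + q - p2aux p q) / √(Fminus p q) := by positivity
  have hff := mul_nonneg (hf (p2aux p q)) (hf (p + q - p2aux p q))
  have hww := mul_nonneg hwp hwq
  rw [weightedK1_eq_of_Fminus_pos h,
    abs_of_nonneg (mul_nonneg (mul_nonneg hww hff) hresonant)]
  calc _ ≤ √(γ / (10 * (β + γ) ^ 3))⁻¹ * √(γ / (10 * (β + γ) ^ 3))⁻¹ * (1 / γ * (1 / γ)) *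
          (cos ((p - q) / 4) / cos (resonantPhase p q)) :=
        mul_le_mul
          (mul_le_mul (mul_le_mul hwp_le hwq_le hwq (sqrt_nonneg _))
            (mul_le_mul (hf_le _) (hf_le _) (hf _) (by positivity)) hff (by positivity))
          (ω_p2aux_mul_ω_p3_div_sqrt_Fminus_le hp hq h) hresonant (by positivity)
    _ = 10 * (β + γ) ^ 3 / γ ^ 3 * (cos ((p - q) / 4) / cos (resonantPhase p q)) := by
        rw [mul_self_sqrt (by positivity)]
        field_simp

lemma abs_weightedK1_le_of_notMem_singularSet (hβ : 0 ≤ β) (hγ : 0 < γ)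
    (hδ : δ ∈ Ioo 0 π) (hp : p ∈ Ioo 0 (2 * π)) (hq : q ∈ Ioo 0 (2 * π))
    (hpq : (p, q) ∉ singularSet δ) :
    |weightedK1 β γ (p, q)| ≤ 10 * (β + γ) ^ 3 / γ ^ 3 * (1 / sin δ) := by
  have hsin : 0 < sin δ := sin_pos_of_mem_Ioo hδ
  rcases le_or_gt (Fminus p q) 0 with h | h
  · rw [weightedK1_eq_zero_of_Fminus_nonpos h, abs_zero]
    positivity
  have hθ : |resonantPhase p q| ≤ π / 2 - δ := not_lt.1 fun hθ => hpq ⟨h, hθ⟩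
  have hcos : sin δ ≤ cos (resonantPhase p q) := by
    rw [← cos_pi_div_two_sub, ← cos_abs (resonantPhase p q)]
    exact cos_le_cos_of_nonneg_of_le_pi (abs_nonneg _) (by linarith [hδ.1, pi_pos]) hθ
  refine (abs_weightedK1_le hβ hγ hp hq h).trans ?_
  gcongr
  exact cos_le_one _

instance : IsFiniteMeasure μ2π := by
  unfold μ2π
  infer_instance

lemma memLp_indicator_compl_singularSet (hβ : 0 ≤ β) (hγ : 0 < γ) (hδ : δ ∈ Ioo 0 π) :
    MemLp ((singularSet δ)ᶜ.indicator (weightedK1 β γ)) 2 (μ2π.prod μ2π) := by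
  have hsin : 0 < sin δ := sin_pos_of_mem_Ioo hδ
  refine MemLp.of_bound ((measurable_weightedK1 β γ).indicator
    (measurableSet_singularSet δ).compl).aestronglyMeasurable
    (10 * (β + γ) ^ 3 / γ ^ 3 * (1 / sin δ)) ?_
  have hsquare : ∀ᵐ z ∂μ2π.prod μ2π, z ∈ Ioo 0 (2 * π) ×ˢ Ioo 0 (2 * π) := by
    rw [μ2π, Measure.prod_restrict]
    exact ae_restrict_mem (measurableSet_Ioo.prod measurableSet_Ioo)
  filter_upwards [hsquare] with z hz
  by_cases hzδ : z ∈ singularSet δ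
  · rw [indicator_of_notMem (notMem_compl_iff.2 hzδ), norm_zero]
    positivity
  · rw [indicator_of_mem hzδ]
    exact abs_weightedK1_le_of_notMem_singularSet hβ hγ hδ hz.1 hz.2 hzδ

lemma lintegral_enorm_indicator_singularSet_le (hβ : 0 ≤ β) (hγ : 0 < γ) (hδ : 0 ≤ δ)
    (hp : p ∈ Ioo 0 (2 * π)) :
    ∫⁻ q, ‖(singularSet δ).indicator (weightedK1 β γ) (p, q)‖ₑ ∂μ2π ≤
      ENNReal.ofReal (10 * (β + γ) ^ 3 / γ ^ 3 * (16 * δ)) := by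
  have hslice : MeasurableSet (Prod.mk p ⁻¹' singularSet δ) :=
    measurable_prodMk_left (measurableSet_singularSet δ)
  have hC : 0 ≤ 10 * (β + γ) ^ 3 / γ ^ 3 := by positivity
  calc ∫⁻ q, ‖(singularSet δ).indicator (weightedK1 β γ) (p, q)‖ₑ ∂μ2π
      = ∫⁻ q in Ioo 0 (2 * π) ∩ Prod.mk p ⁻¹' singularSet δ, ‖weightedK1 β γ (p, q)‖ₑ := by
        simp only [enorm_indicator_eq_indicator_enorm]
        rw [inter_comm, ← Measure.restrict_restrict hslice, ← lintegral_indicator hslice]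
        rfl
    _ ≤ ∫⁻ q in Ioo 0 (2 * π) ∩ Prod.mk p ⁻¹' singularSet δ,
          ENNReal.ofReal (10 * (β + γ) ^ 3 / γ ^ 3) *
            ENNReal.ofReal (cos ((p - q) / 4) / cos (resonantPhase p q)) := by
        refine setLIntegral_mono' (measurableSet_Ioo.inter hslice) fun q hq => ?_
        rw [enorm_eq_ofReal_abs, ← ENNReal.ofReal_mul hC]
        exact ENNReal.ofReal_le_ofReal (abs_weightedK1_le hβ hγ hp hq.1 hq.2.1)
    _ ≤ ENNReal.ofReal (10 * (β + γ) ^ 3 / γ ^ 3 * (16 * δ)) := by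
        rw [lintegral_const_mul' _ _ ENNReal.ofReal_ne_top, ENNReal.ofReal_mul hC]
        gcongr
        exact lintegral_singularSet_le hδ hp

lemma exists_mem_Ioo_pi_mul_le {C ε : ℝ} (hC : 0 < C) (hε : 0 < ε) :
    ∃ δ ∈ Ioo 0 π, C * (16 * δ) ≤ ε := by
  refine ⟨min 1 (ε / (16 * C)), ⟨by positivity, ?_⟩, ?_⟩
  · exact (min_le_left _ _).trans_lt (by linarith [pi_gt_three])
  · calc C * (16 * min 1 (ε / (16 * C))) ≤ C * (16 * (ε / (16 * C))) := by
          gcongr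
          exact min_le_right _ _
      _ = ε := by field_simp

theorem exists_singularSet_split (hβ : 0 ≤ β) (hγ : 0 < γ) {ε : ℝ≥0} (hε : 0 < ε) :
    ∃ s : Set (ℝ × ℝ), MeasurableSet s ∧
      MemLp (s.indicator (weightedK1 β γ)) 2 (μ2π.prod μ2π) ∧
      (∀ᵐ p ∂μ2π, ∫⁻ q, ‖sᶜ.indicator (weightedK1 β γ) (p, q)‖ₑ ∂μ2π ≤ ε) ∧
      ∀ᵐ q ∂μ2π, ∫⁻ p, ‖sᶜ.indicator (weightedK1 β γ) (p, q)‖ₑ ∂μ2π ≤ ε := by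
  obtain ⟨δ, hδ, hδε⟩ := exists_mem_Ioo_pi_mul_le
    (by positivity : 0 < 10 * (β + γ) ^ 3 / γ ^ 3) (NNReal.coe_pos.2 hε)
  have hrow : ∀ᵐ p ∂μ2π,
      ∫⁻ q, ‖(singularSet δ).indicator (weightedK1 β γ) (p, q)‖ₑ ∂μ2π ≤ ε := by
    filter_upwards [ae_restrict_mem measurableSet_Ioo] with p hp
    rw [← ENNReal.ofReal_coe_nnreal]
    exact (lintegral_enorm_indicator_singularSet_le hβ hγ hδ.1.le hp).trans
      (ENNReal.ofReal_le_ofReal hδε)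
  have hswap (p q : ℝ) : (singularSet δ).indicator (weightedK1 β γ) (p, q) =
      (singularSet δ).indicator (weightedK1 β γ) (q, p) := by
    classical
    simp only [indicator_apply, ← swap_mem_singularSet (z := (p, q)),
      ← weightedK1_swap (p, q), Prod.swap_prod_mk]
  refine ⟨(singularSet δ)ᶜ, (measurableSet_singularSet δ).compl,
    memLp_indicator_compl_singularSet hβ hγ hδ, ?_, ?_⟩
  · simpa only [compl_compl] using hrow
  · simpa only [compl_compl, hswap] using hrow

end WeightedKernel

/-- **Compactness of the weighted `K₁` operator:** for `β, γ > 0`, the integral operator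
on `L²(0,2π)` with kernel `a(p)^{−1/2} K₁(p,q) a(q)^{−1/2}` is a well-defined bounded
linear operator which is compact. -/
theorem stmt10 (β γ : ℝ) (hβ : 0 < β) (hγ : 0 < γ) :
    ∃ T : Lp ℝ 2 μ2π →L[ℝ] Lp ℝ 2 μ2π,
      (∀ g : Lp ℝ 2 μ2π,
        (T g : ℝ → ℝ) =ᵐ[μ2π] fun p => ∫ q in Set.Ioo (0:ℝ) (2 * π),
          afreq β γ p ^ (-(1:ℝ)/2) * K1 β γ p q * afreq β γ q ^ (-(1:ℝ)/2) * g q) ∧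
      IsCompactOperator T := by
  obtain ⟨T, hkernel, hcompact⟩ := exists_hasIntegralKernel_isCompactOperator
    (measurable_weightedK1 β γ).stronglyMeasurable
    fun _ hε => exists_singularSet_split hβ.le hγ hε
  exact ⟨T, hkernel, hcompact⟩
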